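/- Let H be a compact metrizable space, let n ≥ 1, and let v_1, …, v_{n+1} be n+1 distinct points of H. Let (X_1,d_1,a_1), …, (X_{n+1},d_{n+1},a_{n+1}) be pointed proper CAT(0) metric spaces with d_pGH((X_i,d_i,a_i),(X_j,d_j,a_j)) > 0 for all distinct i, j. Then there exists a topological embedding Φ : H → 𝒫𝒵 (into the space of pointed proper metric spaces with the pointed Gromov–Hausdorff distance) such that Φ(v_i) = (X_i,d_i,a_i) for every i = 1, …, n+1. -/

import Mathlib

/-- A metric space is *geodesic* if any two points `x, y` are joined by a
geodesic, i.e. a map `γ : [0,1] → X` with `γ 0 = x`, `γ 1 = y` and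
`dist (γ s) (γ t) = |s - t| * dist x y`. -/
def IsGeodesicSpace (X : Type*) [MetricSpace X] : Prop :=
  ∀ x y : X, ∃ γ : ℝ → X, γ 0 = x ∧ γ 1 = y ∧
    ∀ s ∈ Set.Icc (0 : ℝ) 1, ∀ t ∈ Set.Icc (0 : ℝ) 1,
      dist (γ s) (γ t) = |s - t| * dist x y

/-- A metric space is *CAT(0)* if it is geodesic and every geodesic triangle
satisfies the Euclidean comparison inequality; equivalently (the formulation
used here), the comparison (CN) inequality holds along every geodesic. -/
def IsCAT0Space (X : Type*) [MetricSpace X] : Prop :=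
  IsGeodesicSpace X ∧
  ∀ x y z : X, ∀ γ : ℝ → X, γ 0 = x → γ 1 = y →
    (∀ s ∈ Set.Icc (0 : ℝ) 1, ∀ t ∈ Set.Icc (0 : ℝ) 1,
      dist (γ s) (γ t) = |s - t| * dist x y) →
    ∀ t ∈ Set.Icc (0 : ℝ) 1,
      dist z (γ t) ^ 2 ≤
        (1 - t) * dist z x ^ 2 + t * dist z y ^ 2 - t * (1 - t) * dist x y ^ 2

/-- `IsAdmissiblePair a b t h` says that `h` is a `(t; a, b)`-admissible metric
on the disjoint union `X ⊕ Y`: it is a metric restricting to the given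
distances on `X²` and `Y²`, with `h(a,b) < t`, and the closed ball of radius
`t⁻¹` around `a` (resp. `b`) is contained in the open `t`-neighbourhood of `Y`
(resp. `X`). -/
def IsAdmissiblePair {X Y : Type*} [MetricSpace X] [MetricSpace Y]
    (a : X) (b : Y) (t : ℝ) (h : X ⊕ Y → X ⊕ Y → ℝ) : Prop :=
  (∀ p q, h p q = 0 ↔ p = q) ∧
  (∀ p q, h p q = h q p) ∧
  (∀ p q r, h p r ≤ h p q + h q r) ∧
  (∀ x y : X, h (Sum.inl x) (Sum.inl y) = dist x y) ∧
  (∀ x y : Y, h (Sum.inr x) (Sum.inr y) = dist x y) ∧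
  h (Sum.inl a) (Sum.inr b) < t ∧
  (∀ p, h (Sum.inl a) p ≤ t⁻¹ → ∃ y : Y, h p (Sum.inr y) < t) ∧
  (∀ p, h (Sum.inr b) p ≤ t⁻¹ → ∃ x : X, h p (Sum.inl x) < t)

/-- The pointed Gromov–Hausdorff distance
`d_pGH = min { d'_pGH, 1/2 }`, where `d'_pGH` is the infimum of all `t > 0`
for which a `(t; a, b)`-admissible metric on `X ⊕ Y` exists.  (Taking `sInf`
of the set together with `1/2` implements the truncation at `1/2`.) -/
noncomputable def pghDistOf (X Y : Type*) [MetricSpace X] [MetricSpace Y]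
    (a : X) (b : Y) : ℝ :=
  sInf (insert (1 / 2 : ℝ)
    {t : ℝ | 0 < t ∧ ∃ h : X ⊕ Y → X ⊕ Y → ℝ, IsAdmissiblePair a b t h})

/-- A pointed proper metric space: a (proper) metric space together with a
base point. -/
structure PointedProperMetricSpace : Type 1 where
  carrier : Type
  [met : MetricSpace carrier]
  [prop : ProperSpace carrier]
  pt : carrier

attribute [instance] PointedProperMetricSpace.met PointedProperMetricSpace.prop

/-- The pointed Gromov–Hausdorff distance between pointed proper metric
spaces. -/
noncomputable def pghDist (p q : PointedProperMetricSpace) : ℝ :=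
  pghDistOf p.carrier q.carrier p.pt q.pt

/-- The topology induced by the pointed Gromov–Hausdorff distance (generated
by its open balls). -/
instance : TopologicalSpace PointedProperMetricSpace :=
  TopologicalSpace.generateFrom
    {s | ∃ (p : PointedProperMetricSpace) (ε : ℝ), 0 < ε ∧
      s = {q | pghDist p q < ε}}

/-- Two pointed metric spaces are identified in `𝒫ℳ` when there is a
base-point-preserving isometric bijection between them. -/
instance pointedIsometrySetoid : Setoid PointedProperMetricSpace where
  r p q := ∃ e : p.carrier ≃ᵢ q.carrier, e p.pt = q.pt
  iseqv := by
    refine ⟨fun p => ⟨IsometryEquiv.refl _, rfl⟩, ?_, ?_⟩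
    · rintro p q ⟨e, he⟩
      exact ⟨e.symm, by rw [← he, IsometryEquiv.symm_apply_apply]⟩
    · rintro p q r ⟨e, he⟩ ⟨f, hf⟩
      exact ⟨e.trans f, by rw [IsometryEquiv.trans_apply, he, hf]⟩

/-- `𝒫ℳ`: the space of pointed isometry classes of pointed proper metric
spaces, with the (quotient of the) pointed Gromov–Hausdorff topology. -/
def PGHSpace : Type 1 := Quotient pointedIsometrySetoid

instance : TopologicalSpace PGHSpace :=
  instTopologicalSpaceQuotient

/-- The pointed isometry class of a pointed proper metric space. -/
def PGHSpace.mk (X : Type) [MetricSpace X] [ProperSpace X] (a : X) : PGHSpace :=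
  Quotient.mk pointedIsometrySetoid ⟨X, a⟩

/-- `𝒫𝒵`: the subset of `𝒫ℳ` consisting of pointed proper CAT(0)
spaces. -/
def PGHCat0 : Set PGHSpace :=
  {x | IsCAT0Space (Quotient.out (α := PointedProperMetricSpace) x).carrier}

/-!
The interpolating spaces all live in the `ℓ²`-product of the spaces `X i` and a Hilbert sum of
Euclidean spaces `E m`: restrict the coordinate in `X i` to a ball around `a i` that shrinks from
all of `X i` to a point as a parameter `θ i` runs from `0` to `1`, and the `m`-th block to a ball
of radius `φ m * 4⁻ᵐ`.  Convex subsets of CAT(0) spaces are CAT(0), and moving the parameters moves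
these sets continuously.  At a point where `θ i = 0`, all other `θ j` are `1` and all `φ m` vanish,
only the factor `X i` survives; Urysohn functions on `H` provide such parameters at the points
`v i`.

Injectivity is a matter of dimension.  The `φ m` are chosen to separate points, and the dimension
of `E m` is chosen after those of the earlier blocks, so large that the vectors of length `4⁻ᵐ`
along an orthonormal basis outnumber every sufficiently separated subset of a large ball in the
product of the `X i` and the earlier blocks.  The later blocks are too small to matter, so spaces
with `φ m = 1` and `φ m = 0` are never pointed Gromov–Hausdorff close.  A continuous injection of a
compact space is an embedding, and the general case follows on embedding `H` in the Hilbert cube.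
-/

open Metric Topology unitInterval

section PointedGromovHausdorff

variable {X Y Z : Type*} [MetricSpace X] [MetricSpace Y] [MetricSpace Z]
  {a : X} {b : Y} {e : Z} {s t δ : ℝ} {c : X → Y → ℝ} {c' : Y → Z → ℝ}

/-- A *coupling* of two metric spaces: cross distances which, together with the two given metrics,
form a pseudometric on the disjoint union. -/
structure IsCoupling (c : X → Y → ℝ) : Prop where
  le_dist_add : ∀ x₁ x₂ y, c x₁ y ≤ dist x₁ x₂ + c x₂ y
  le_add_dist : ∀ x y₁ y₂, c x y₁ ≤ c x y₂ + dist y₂ y₁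
  dist_left_le : ∀ x₁ x₂ y, dist x₁ x₂ ≤ c x₁ y + c x₂ y
  dist_right_le : ∀ x y₁ y₂, dist y₁ y₂ ≤ c x y₁ + c x y₂

/-- A coupling under which the base points are `t`-close and the `t⁻¹`-ball around each base point
is in the `t`-neighbourhood of the other space.  It differs from an admissible metric in that
cross distances may vanish. -/
structure IsPointedCoupling (a : X) (b : Y) (t : ℝ) (c : X → Y → ℝ) : Prop extends
    IsCoupling c where
  base_lt : c a b < t
  exists_right_lt : ∀ x, dist a x ≤ t⁻¹ → ∃ y, c x y < t
  exists_left_lt : ∀ y, dist b y ≤ t⁻¹ → ∃ x, c x y < t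

/-- The metric on the disjoint union given by the cross distances `c + δ`. -/
def couplingDist (c : X → Y → ℝ) (δ : ℝ) : X ⊕ Y → X ⊕ Y → ℝ
  | Sum.inl x, Sum.inl x' => dist x x'
  | Sum.inr y, Sum.inr y' => dist y y'
  | Sum.inl x, Sum.inr y => c x y + δ
  | Sum.inr y, Sum.inl x => c x y + δ

theorem IsCoupling.nonneg (h : IsCoupling c) (x : X) (y : Y) : 0 ≤ c x y := by
  linarith [h.dist_left_le x x y, dist_self x]

theorem IsCoupling.swap (h : IsCoupling c) : IsCoupling fun y x => c x y where
  le_dist_add y y' x := by linarith [h.le_add_dist x y y', dist_comm y y']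
  le_add_dist y x x' := by linarith [h.le_dist_add x x' y, dist_comm x x']
  dist_left_le y y' x := h.dist_right_le x y y'
  dist_right_le y x x' := h.dist_left_le x x' y

theorem IsPointedCoupling.swap (h : IsPointedCoupling a b t c) :
    IsPointedCoupling b a t fun y x => c x y where
  toIsCoupling := h.toIsCoupling.swap
  base_lt := h.base_lt
  exists_right_lt := h.exists_left_lt
  exists_left_lt := h.exists_right_lt

theorem IsPointedCoupling.pos (h : IsPointedCoupling a b t c) : 0 < t :=
  (h.nonneg a b).trans_lt h.base_lt

theorem couplingDist_eq_zero_iff (h : IsCoupling c) (hδ : 0 < δ) (p q : X ⊕ Y) :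
    couplingDist c δ p q = 0 ↔ p = q := by
  rcases p with x | y <;> rcases q with x' | y'
  · simp [couplingDist]
  · simpa [couplingDist] using (add_pos_of_nonneg_of_pos (h.nonneg x y') hδ).ne'
  · simpa [couplingDist] using (add_pos_of_nonneg_of_pos (h.nonneg x' y) hδ).ne'
  · simp [couplingDist]

theorem couplingDist_comm (c : X → Y → ℝ) (δ : ℝ) (p q : X ⊕ Y) :
    couplingDist c δ p q = couplingDist c δ q p := by
  rcases p with x | y <;> rcases q with x' | y' <;> simp [couplingDist, dist_comm]

theorem couplingDist_triangle (h : IsCoupling c) (hδ : 0 ≤ δ) (p q r : X ⊕ Y) :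
    couplingDist c δ p r ≤ couplingDist c δ p q + couplingDist c δ q r := by
  rcases p with x | y <;> rcases q with x' | y' <;> rcases r with x'' | y'' <;>
    simp only [couplingDist]
  · exact dist_triangle _ _ _
  · linarith [h.le_dist_add x x' y'']
  · linarith [h.dist_left_le x x'' y']
  · linarith [h.le_add_dist x y'' y']
  · linarith [h.le_dist_add x'' x' y, dist_comm x'' x']
  · linarith [h.dist_right_le x' y y'']
  · linarith [h.le_add_dist x'' y y', dist_comm y y']
  · exact dist_triangle _ _ _

theorem IsPointedCoupling.isAdmissiblePair_couplingDist (h : IsPointedCoupling a b t c)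
    (hδ : 0 < δ) : IsAdmissiblePair a b (t + δ) (couplingDist c δ) := by
  have h_inv : (t + δ)⁻¹ ≤ t⁻¹ := inv_anti₀ h.pos (by linarith)
  have h_pos : 0 < t + δ := add_pos h.pos hδ
  refine ⟨couplingDist_eq_zero_iff h.toIsCoupling hδ, couplingDist_comm c δ,
    couplingDist_triangle h.toIsCoupling hδ.le, fun _ _ => rfl, fun _ _ => rfl,
    by simpa [couplingDist] using h.base_lt, ?_, ?_⟩
  · rintro (x | y) hp
    · obtain ⟨y, hy⟩ := h.exists_right_lt x (hp.trans h_inv)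
      exact ⟨y, by simpa [couplingDist] using hy⟩
    · exact ⟨y, by simpa [couplingDist] using h_pos⟩
  · rintro (x | y) hp
    · exact ⟨x, by simpa [couplingDist] using h_pos⟩
    · obtain ⟨x, hx⟩ := h.exists_left_lt y (hp.trans h_inv)
      exact ⟨x, by simpa [couplingDist] using hx⟩

theorem IsAdmissiblePair.isPointedCoupling {d : X ⊕ Y → X ⊕ Y → ℝ}
    (h : IsAdmissiblePair a b t d) :
    IsPointedCoupling a b t fun x y => d (Sum.inl x) (Sum.inr y) := by
  obtain ⟨-, d_comm, d_triangle, d_inl, d_inr, base_lt, left, right⟩ := h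
  refine ⟨⟨?_, ?_, ?_, ?_⟩, base_lt, ?_, ?_⟩
  · intro x x' y
    rw [← d_inl]
    exact d_triangle _ _ _
  · intro x y y'
    rw [← d_inr]
    exact d_triangle _ _ _
  · intro x x' y
    rw [← d_inl, d_comm (Sum.inl x')]
    exact d_triangle _ _ _
  · intro x y y'
    rw [← d_inr, d_comm (Sum.inl x)]
    exact d_triangle _ _ _
  · intro x hx
    exact left _ (by rwa [d_inl])
  · intro y hy
    obtain ⟨x, hx⟩ := right (Sum.inr y) (by rwa [d_inr])
    exact ⟨x, by rwa [d_comm]⟩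

theorem bddBelow_insert_half_admissible (a : X) (b : Y) :
    BddBelow (insert (1 / 2 : ℝ) {t : ℝ | 0 < t ∧ ∃ d, IsAdmissiblePair a b t d}) := by
  refine ⟨0, ?_⟩
  rintro t (rfl | ⟨ht, -⟩)
  · norm_num
  · exact ht.le

theorem pghDistOf_nonneg (a : X) (b : Y) : 0 ≤ pghDistOf X Y a b := by
  apply Real.sInf_nonneg
  rintro t (rfl | ⟨ht, -⟩)
  · norm_num
  · exact ht.le

theorem pghDistOf_le_half (a : X) (b : Y) : pghDistOf X Y a b ≤ 1 / 2 :=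
  csInf_le (bddBelow_insert_half_admissible a b) (Set.mem_insert _ _)

theorem IsPointedCoupling.pghDistOf_le (h : IsPointedCoupling a b t c) :
    pghDistOf X Y a b ≤ t := by
  refine le_of_forall_pos_le_add fun δ hδ => csInf_le (bddBelow_insert_half_admissible a b) ?_
  exact Or.inr ⟨add_pos h.pos hδ, _, h.isAdmissiblePair_couplingDist hδ⟩

theorem exists_isPointedCoupling (h_lt : pghDistOf X Y a b < t) (ht : t ≤ 1 / 2) :
    ∃ s < t, ∃ c, IsPointedCoupling a b s c := by
  obtain ⟨s, rfl | ⟨-, d, hd⟩, hst⟩ := exists_lt_of_csInf_lt (Set.insert_nonempty _ _) h_lt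
  · exact absurd hst ht.not_gt
  · exact ⟨s, hst, _, hd.isPointedCoupling⟩

theorem pghDistOf_comm_le (a : X) (b : Y) : pghDistOf Y X b a ≤ pghDistOf X Y a b := by
  by_contra! h_lt
  obtain ⟨s, hs, c, hc⟩ := exists_isPointedCoupling h_lt (pghDistOf_le_half b a)
  exact hs.not_ge hc.swap.pghDistOf_le

theorem pghDistOf_comm (a : X) (b : Y) : pghDistOf X Y a b = pghDistOf Y X b a :=
  le_antisymm (pghDistOf_comm_le b a) (pghDistOf_comm_le a b)

/-- The numerical reason for truncating the distance at `1 / 2`: a point of the `(s + t)⁻¹`-ball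
is moved by at most `2 * s`, so it stays in the `t⁻¹`-ball. -/
theorem two_mul_add_inv_add_le_inv (hs : 0 < s) (ht : 0 < t) (hst : s + t ≤ 1 / 2) :
    2 * s + (s + t)⁻¹ ≤ t⁻¹ := by
  have h_diff : t⁻¹ - (s + t)⁻¹ = s / (t * (s + t)) := by field_simp; ring
  have h_prod : t * (s + t) ≤ 1 / 2 * (1 / 2) := by gcongr; linarith
  have h_div : 2 * s ≤ s / (t * (s + t)) := by
    rw [le_div_iff₀ (by positivity)]
    nlinarith
  linarith

theorem IsCoupling.iInf_add_le (h : IsCoupling c) (h' : IsCoupling c') (x : X) (y : Y) (z : Z) :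
    ⨅ y, (c x y + c' y z) ≤ c x y + c' y z := by
  refine ciInf_le ⟨0, ?_⟩ y
  rintro _ ⟨y, rfl⟩
  exact add_nonneg (h.nonneg _ _) (h'.nonneg _ _)

theorem IsCoupling.comp [Nonempty Y] (h : IsCoupling c) (h' : IsCoupling c') :
    IsCoupling fun x z => ⨅ y, (c x y + c' y z) where
  le_dist_add x x' z := by
    rw [← sub_le_iff_le_add']
    refine le_ciInf fun y => ?_
    linarith [h.iInf_add_le h' x y z, h.le_dist_add x x' y]
  le_add_dist x z z' := by
    rw [← sub_le_iff_le_add]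
    refine le_ciInf fun y => ?_
    linarith [h.iInf_add_le h' x y z, h'.le_add_dist y z z']
  dist_left_le x x' z := by
    refine le_ciInf_add_ciInf fun y y' => ?_
    linarith [h.dist_left_le x x' y, h'.dist_left_le y y' z, h.le_add_dist x' y y',
      dist_comm y y']
  dist_right_le x z z' := by
    refine le_ciInf_add_ciInf fun y y' => ?_
    linarith [h'.dist_right_le y z z', h.dist_right_le x y y', h'.le_dist_add y y' z']

theorem IsPointedCoupling.exists_comp_lt (h : IsPointedCoupling a b s c)
    (h' : IsPointedCoupling b e t c') (hst : s + t ≤ 1 / 2) {x : X} (hx : dist a x ≤ (s + t)⁻¹) :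
    ∃ z, ⨅ y, (c x y + c' y z) < s + t := by
  obtain ⟨y, hy⟩ := h.exists_right_lt x (hx.trans (inv_anti₀ h.pos (by linarith [h'.pos])))
  have h_mem : dist b y ≤ t⁻¹ := by
    linarith [two_mul_add_inv_add_le_inv h.pos h'.pos hst, h.dist_right_le x b y,
      h.le_dist_add x a b, dist_comm a x, h.base_lt]
  obtain ⟨z, hz⟩ := h'.exists_right_lt y h_mem
  exact ⟨z, by linarith [h.iInf_add_le h'.toIsCoupling x y z]⟩

theorem IsPointedCoupling.comp (h : IsPointedCoupling a b s c) (h' : IsPointedCoupling b e t c')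
    (hst : s + t ≤ 1 / 2) :
    IsPointedCoupling a e (s + t) fun x z => ⨅ y, (c x y + c' y z) where
  toIsCoupling := have : Nonempty Y := ⟨b⟩; h.toIsCoupling.comp h'.toIsCoupling
  base_lt := by linarith [h.iInf_add_le h'.toIsCoupling a b e, h.base_lt, h'.base_lt]
  exists_right_lt _ hx := h.exists_comp_lt h' hst hx
  exists_left_lt z hz := by
    rw [add_comm] at hz hst
    simpa only [add_comm] using h'.swap.exists_comp_lt h.swap hst hz

theorem pghDistOf_triangle (a : X) (b : Y) (e : Z) :
    pghDistOf X Z a e ≤ pghDistOf X Y a b + pghDistOf Y Z b e := by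
  by_contra! h_lt
  obtain ⟨δ, hδ, h_eq⟩ := exists_pos_add_of_lt' h_lt
  have h_half := pghDistOf_le_half a e
  have h_left := pghDistOf_nonneg a b
  have h_right := pghDistOf_nonneg b e
  obtain ⟨s, hs, c, hc⟩ := exists_isPointedCoupling
    (lt_add_of_pos_right (pghDistOf X Y a b) (half_pos hδ)) (by linarith)
  obtain ⟨t, ht, c', hc'⟩ := exists_isPointedCoupling
    (lt_add_of_pos_right (pghDistOf Y Z b e) (half_pos hδ)) (by linarith)
  linarith [(hc.comp hc' (by linarith)).pghDistOf_le]

theorem pghDistOf_le_of_isometry {f : X → Z} {g : Y → Z} (hf : Isometry f) (hg : Isometry g)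
    (h_base : f a = g b) (ht : 0 < t)
    (h_left : ∀ x, dist a x ≤ t⁻¹ → ∃ y, dist (f x) (g y) < t)
    (h_right : ∀ y, dist b y ≤ t⁻¹ → ∃ x, dist (f x) (g y) < t) :
    pghDistOf X Y a b ≤ t := by
  refine IsPointedCoupling.pghDistOf_le (c := fun x y => dist (f x) (g y))
    ⟨⟨fun x x' y => ?_, fun x y y' => ?_, fun x x' y => ?_, fun x y y' => ?_⟩, ?_,
      h_left, h_right⟩
  · exact hf.dist_eq x x' ▸ dist_triangle _ _ _
  · exact hg.dist_eq y' y ▸ dist_triangle _ _ _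
  · exact hf.dist_eq x x' ▸ dist_triangle_right _ _ _
  · exact hg.dist_eq y y' ▸ dist_triangle_left _ _ _
  · simpa only [h_base, dist_self] using ht

theorem exists_map_of_pghDistOf_lt (h_lt : pghDistOf X Y a b < t) (ht : t ≤ 1 / 2) :
    ∃ f : X → Y, (∀ x, dist a x ≤ t⁻¹ → dist b (f x) < dist a x + 2 * t) ∧
      ∀ x x', dist a x ≤ t⁻¹ → dist a x' ≤ t⁻¹ → dist x x' < dist (f x) (f x') + 2 * t := by
  obtain ⟨s, hst, c, hc⟩ := exists_isPointedCoupling h_lt ht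
  have h_close : ∀ x, ∃ y, dist a x ≤ t⁻¹ → c x y < s := by
    intro x
    by_cases hx : dist a x ≤ t⁻¹
    · obtain ⟨y, hy⟩ := hc.exists_right_lt x (hx.trans (inv_anti₀ hc.pos hst.le))
      exact ⟨y, fun _ => hy⟩
    · exact ⟨b, fun h => absurd h hx⟩
  choose f hf using h_close
  refine ⟨f, fun x hx => ?_, fun x x' hx hx' => ?_⟩
  · linarith [hc.dist_right_le a b (f x), hc.le_dist_add a x (f x), hc.base_lt, hf x hx]
  · linarith [hc.dist_left_le x x' (f x), hc.le_add_dist x' (f x) (f x'), hf x hx, hf x' hx',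
      dist_comm (f x) (f x')]

theorem pghDistOf_eq_zero_of_isometryEquiv (f : X ≃ᵢ Y) (h_base : f a = b) :
    pghDistOf X Y a b = 0 := by
  refine le_antisymm (le_of_forall_gt_imp_ge_of_dense fun t ht => ?_) (pghDistOf_nonneg _ _)
  exact pghDistOf_le_of_isometry f.isometry isometry_id h_base ht
    (fun x _ => ⟨f x, by simpa using ht⟩) fun y _ => ⟨f.symm y, by simpa using ht⟩

end PointedGromovHausdorff

theorem isOpen_iff_pghDist {S : Set PointedProperMetricSpace} :
    IsOpen S ↔ ∀ p ∈ S, ∃ ε > 0, ∀ q, pghDist p q < ε → q ∈ S := by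
  constructor
  · intro hS
    induction hS with
    | basic S hS =>
      obtain ⟨p, ε, -, rfl⟩ := hS
      intro q (hq : pghDist p q < ε)
      exact ⟨ε - pghDist p q, by linarith, fun r hr =>
        (pghDistOf_triangle _ _ _).trans_lt (lt_sub_iff_add_lt'.1 hr)⟩
    | univ => exact fun _ _ => ⟨1, one_pos, fun _ _ => trivial⟩
    | inter S T _ _ hS hT =>
      rintro p ⟨hpS, hpT⟩
      obtain ⟨ε, hε, hεS⟩ := hS p hpS
      obtain ⟨δ, hδ, hδT⟩ := hT p hpT
      exact ⟨min ε δ, lt_min hε hδ, fun q hq =>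
        ⟨hεS q (hq.trans_le (min_le_left _ _)), hδT q (hq.trans_le (min_le_right _ _))⟩⟩
    | sUnion 𝒮 _ h𝒮 =>
      rintro p ⟨S, hS, hp⟩
      obtain ⟨ε, hε, hεS⟩ := h𝒮 S hS p hp
      exact ⟨ε, hε, fun q hq => ⟨S, hS, hεS q hq⟩⟩
  · intro hS
    refine isOpen_iff_forall_mem_open.2 fun p hp => ?_
    obtain ⟨ε, hε, hεS⟩ := hS p hp
    exact ⟨{q | pghDist p q < ε}, hεS,
      TopologicalSpace.isOpen_generateFrom_of_mem ⟨p, ε, hε, rfl⟩,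
      (pghDistOf_eq_zero_of_isometryEquiv (IsometryEquiv.refl _) rfl).trans_lt hε⟩

noncomputable instance : PseudoMetricSpace PointedProperMetricSpace :=
  PseudoMetricSpace.ofDistTopology pghDist
    (fun _ => pghDistOf_eq_zero_of_isometryEquiv (IsometryEquiv.refl _) rfl)
    (fun _ _ => pghDistOf_comm _ _) (fun _ _ _ => pghDistOf_triangle _ _ _)
    fun _ => isOpen_iff_pghDist

theorem inseparable_of_equiv {p q : PointedProperMetricSpace} (h : p ≈ q) : Inseparable p q :=
  let ⟨f, hf⟩ := h
  Metric.inseparable_iff.2 (pghDistOf_eq_zero_of_isometryEquiv f hf)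

section Topology

theorem isEmbedding_quotientMk_comp {H P : Type*} [TopologicalSpace H] [CompactSpace H]
    [TopologicalSpace P] [R1Space P] {r : Setoid P} (hr : ∀ p q, r p q → Inseparable p q)
    {Y : H → P} (hY : Continuous Y) (h_inj : ∀ h h', Inseparable (Y h) (Y h') → h = h') :
    IsEmbedding fun h => Quotient.mk r (Y h) := by
  have h_lift : ∀ p q, r p q → SeparationQuotient.mk p = SeparationQuotient.mk q :=
    fun p q hpq => SeparationQuotient.mk_eq_mk.2 (hr p q hpq)
  refine IsEmbedding.of_comp (g := Quotient.lift SeparationQuotient.mk h_lift)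
    (continuous_quot_mk.comp hY) (SeparationQuotient.continuous_mk.quotient_lift h_lift) ?_
  refine (Continuous.isClosedEmbedding (SeparationQuotient.continuous_mk.comp hY) ?_).isEmbedding
  exact fun h h' heq => h_inj h h' (SeparationQuotient.mk_eq_mk.1 heq)

variable {H : Type*} [TopologicalSpace H]

theorem exists_unitInterval_eqOn_zero_one [NormalSpace H] {s t : Set H} (hs : IsClosed s)
    (ht : IsClosed t) (hst : Disjoint s t) : ∃ f : C(H, I), Set.EqOn f 0 s ∧ Set.EqOn f 1 t := by
  obtain ⟨f, hf_zero, hf_one, hf_mem⟩ := exists_continuous_zero_one_of_isClosed hs ht hst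
  exact ⟨⟨fun x => ⟨f x, hf_mem x⟩, f.continuous.subtype_mk _⟩,
    fun x hx => Subtype.ext (hf_zero hx), fun x hx => Subtype.ext (hf_one hx)⟩

theorem exists_unitInterval_zero_one_at_points [T4Space H] {ι : Type*} [Finite ι] {v : ι → H}
    (hv : Function.Injective v) :
    ∃ θ : ι → C(H, I), (∀ i, θ i (v i) = 0) ∧ ∀ i j, j ≠ i → θ i (v j) = 1 := by
  have h_urysohn : ∀ i, ∃ f : C(H, I), f (v i) = 0 ∧ ∀ j, j ≠ i → f (v j) = 1 := by
    intro i
    obtain ⟨f, hf_zero, hf_one⟩ := exists_unitInterval_eqOn_zero_one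
      (isClosed_singleton (x := v i)) ((Set.toFinite {i}ᶜ).image v).isClosed
      (Set.disjoint_singleton_left.2 fun ⟨_, hji, h_eq⟩ => hji (hv h_eq))
    exact ⟨f, hf_zero rfl, fun j hji => hf_one (Set.mem_image_of_mem v hji)⟩
  choose θ hθ_zero hθ_one using h_urysohn
  exact ⟨θ, hθ_zero, hθ_one⟩

theorem exists_seq_unitInterval_separating [T3Space H] [SecondCountableTopology H] (V : Set H)
    (hV : IsClosed V) :
    ∃ φ : ℕ → C(H, I), (∀ m, ∀ x ∈ V, φ m x = 0) ∧
      ∀ x y, x ≠ y → y ∉ V → ∃ m, φ m x = 0 ∧ φ m y = 1 := by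
  have h_basis := TopologicalSpace.isBasis_countableBasis H
  let B : Set (Set H) := insert ∅ (TopologicalSpace.countableBasis H)
  have hB : B.Countable := (TopologicalSpace.countable_countableBasis H).insert ∅
  let J : Set (Set H × Set H) := {p ∈ B ×ˢ B | closure p.1 ⊆ p.2 ∧ Disjoint p.2 V}
  have : Countable J := (hB.prod hB).mono (Set.sep_subset _ _)
  have : Nonempty J := ⟨(∅, ∅), ⟨Set.mem_insert _ _, Set.mem_insert _ _⟩, by simp, by simp⟩
  have h_urysohn : ∀ p : J, ∃ f : C(H, I), Set.EqOn f 0 p.1.2ᶜ ∧ Set.EqOn f 1 (closure p.1.1) := by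
    rintro ⟨⟨U, W⟩, ⟨-, hW : W ∈ B⟩, hUW, -⟩
    have hW_open : IsOpen W := by
      rcases hW with rfl | hW
      exacts [isOpen_empty, h_basis.isOpen hW]
    exact exists_unitInterval_eqOn_zero_one hW_open.isClosed_compl isClosed_closure
      (Set.disjoint_compl_left_iff_subset.2 hUW)
  choose f hf_zero hf_one using h_urysohn
  obtain ⟨g, hg⟩ := exists_surjective_nat J
  refine ⟨fun m => f (g m), fun m x hx => ?_, fun x y hxy hy => ?_⟩
  · exact hf_zero (g m) (Set.disjoint_right.1 (g m).2.2.2 hx)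
  · obtain ⟨W, hW, hyW, hWV⟩ := h_basis.exists_subset_of_mem_open
      (show y ∈ Vᶜ ∩ {x}ᶜ from ⟨hy, hxy.symm⟩) (hV.isOpen_compl.inter isOpen_compl_singleton)
    obtain ⟨U, hU, hyU, hUW⟩ :=
      h_basis.exists_closure_subset ((h_basis.isOpen hW).mem_nhds hyW)
    obtain ⟨m, hm⟩ := hg ⟨(U, W), ⟨Or.inr hU, Or.inr hW⟩, hUW,
      Set.disjoint_left.2 fun z hz => (hWV hz).1⟩
    refine ⟨m, hf_zero (g m) ?_, hf_one (g m) ?_⟩ <;> rw [hm]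
    · exact fun hx => (hWV hx).2 rfl
    · exact subset_closure hyU

end Topology

section GeodesicSpaces

variable {X Y : Type*} [MetricSpace X] [MetricSpace Y] {γ : ℝ → X} {x y : X}

/-- `γ` restricts on `[0, 1]` to a geodesic from `x` to `y`, parametrised proportionally to arc
length; this is the condition appearing in `IsGeodesicSpace` and `IsCAT0Space`. -/
structure IsGeodesicPath (γ : ℝ → X) (x y : X) : Prop where
  apply_zero : γ 0 = x
  apply_one : γ 1 = y
  dist_eq : ∀ s ∈ Set.Icc (0 : ℝ) 1, ∀ t ∈ Set.Icc (0 : ℝ) 1,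
    dist (γ s) (γ t) = |s - t| * dist x y

/-- Any two points of `S` are joined by a geodesic of the ambient space that stays in `S`. -/
def IsGeodesicallyConvex (S : Set X) : Prop :=
  ∀ x ∈ S, ∀ y ∈ S, ∃ γ, IsGeodesicPath γ x y ∧ ∀ t ∈ Set.Icc (0 : ℝ) 1, γ t ∈ S

theorem IsGeodesicSpace.exists_isGeodesicPath (hX : IsGeodesicSpace X) (x y : X) :
    ∃ γ, IsGeodesicPath γ x y :=
  let ⟨γ, h_zero, h_one, h_dist⟩ := hX x y
  ⟨γ, h_zero, h_one, h_dist⟩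

theorem IsGeodesicPath.dist_left (hγ : IsGeodesicPath γ x y) {t : ℝ} (ht : t ∈ Set.Icc 0 1) :
    dist (γ t) x = t * dist x y := by
  simpa [hγ.apply_zero, abs_of_nonneg ht.1] using hγ.dist_eq t ht 0 (by simp)

theorem IsGeodesicPath.dist_right (hγ : IsGeodesicPath γ x y) {t : ℝ} (ht : t ∈ Set.Icc 0 1) :
    dist (γ t) y = (1 - t) * dist x y := by
  simpa [hγ.apply_one, abs_sub_comm t, abs_of_nonneg (sub_nonneg.2 ht.2)] using
    hγ.dist_eq t ht 1 (by simp)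

theorem IsGeodesicPath.map_isometry {f : X → Y} (hf : Isometry f) (hγ : IsGeodesicPath γ x y) :
    IsGeodesicPath (f ∘ γ) (f x) (f y) where
  apply_zero := congrArg f hγ.apply_zero
  apply_one := congrArg f hγ.apply_one
  dist_eq s hs t ht := by simpa only [Function.comp_apply, hf.dist_eq] using hγ.dist_eq s hs t ht

theorem IsGeodesicallyConvex.isGeodesicSpace {S : Set X} (hS : IsGeodesicallyConvex S) :
    IsGeodesicSpace S := by
  intro x y
  obtain ⟨γ, hγ, hγ_mem⟩ := hS x x.2 y y.2
  refine ⟨fun t => ⟨γ (Set.projIcc 0 1 zero_le_one t), hγ_mem _ (Subtype.coe_prop _)⟩,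
    Subtype.ext ?_, Subtype.ext ?_, fun s hs t ht => ?_⟩
  · simp [hγ.apply_zero]
  · simp [hγ.apply_one]
  · simpa only [Set.projIcc_of_mem _ hs, Set.projIcc_of_mem _ ht, Subtype.dist_eq] using
      hγ.dist_eq s hs t ht

theorem IsGeodesicSpace.exists_dist_le_of_dist_le_add (hX : IsGeodesicSpace X) {a p : X}
    {ρ δ : ℝ} (hρ : 0 ≤ ρ) (hδ : 0 ≤ δ) (hp : dist a p ≤ ρ + δ) :
    ∃ q, dist a q ≤ ρ ∧ dist p q ≤ δ := by
  rcases le_or_gt (dist a p) ρ with h_le | h_gt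
  · exact ⟨p, h_le, by simpa using hδ⟩
  obtain ⟨γ, hγ⟩ := hX.exists_isGeodesicPath a p
  have h_pos : 0 < dist a p := hρ.trans_lt h_gt
  have h_mem : ρ / dist a p ∈ Set.Icc (0 : ℝ) 1 :=
    ⟨by positivity, (div_le_one h_pos).2 h_gt.le⟩
  refine ⟨γ (ρ / dist a p), ?_, ?_⟩
  · rw [dist_comm, hγ.dist_left h_mem, div_mul_cancel₀ _ h_pos.ne']
  · rw [dist_comm, hγ.dist_right h_mem, sub_mul, div_mul_cancel₀ _ h_pos.ne']
    linarith

end GeodesicSpaces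

section CAT0

variable {X Y : Type*} [MetricSpace X] [MetricSpace Y]

theorem IsCAT0Space.dist_sq_le (hX : IsCAT0Space X) {γ : ℝ → X} {x y : X}
    (hγ : IsGeodesicPath γ x y) (z : X) {t : ℝ} (ht : t ∈ Set.Icc 0 1) :
    dist z (γ t) ^ 2 ≤
      (1 - t) * dist z x ^ 2 + t * dist z y ^ 2 - t * (1 - t) * dist x y ^ 2 :=
  hX.2 x y z γ hγ.apply_zero hγ.apply_one hγ.dist_eq t ht

/-- The inequality along `γ`, applied to a point `γ' t` of another geodesic, gives
`γ' t = γ t`; so it suffices to check one geodesic per pair of endpoints. -/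
theorem isCAT0Space_of_exists_isGeodesicPath
    (h : ∀ x y : X, ∃ γ, IsGeodesicPath γ x y ∧ ∀ z, ∀ t ∈ Set.Icc (0 : ℝ) 1,
      dist z (γ t) ^ 2 ≤
        (1 - t) * dist z x ^ 2 + t * dist z y ^ 2 - t * (1 - t) * dist x y ^ 2) :
    IsCAT0Space X := by
  refine ⟨fun x y => ?_, fun x y z γ' h_zero h_one h_dist t ht => ?_⟩
  · obtain ⟨γ, hγ, -⟩ := h x y
    exact ⟨γ, hγ.apply_zero, hγ.apply_one, hγ.dist_eq⟩
  · obtain ⟨γ, -, h_cn⟩ := h x y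
    have hγ' : IsGeodesicPath γ' x y := ⟨h_zero, h_one, h_dist⟩
    have h_sq : dist (γ' t) (γ t) ^ 2 ≤ 0 := by
      refine (h_cn (γ' t) t ht).trans_eq ?_
      rw [hγ'.dist_left ht, hγ'.dist_right ht]
      ring
    have h_eq : γ' t = γ t :=
      dist_eq_zero.1 (pow_eq_zero_iff two_ne_zero |>.1 (h_sq.antisymm (sq_nonneg _)))
    exact h_eq ▸ h_cn z t ht

theorem IsCAT0Space.of_isometry (hX : IsCAT0Space X) {f : Y → X} (hf : Isometry f)
    (hY : IsGeodesicSpace Y) : IsCAT0Space Y := by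
  refine ⟨hY, fun x y z γ h_zero h_one h_dist t ht => ?_⟩
  have hγ : IsGeodesicPath γ x y := ⟨h_zero, h_one, h_dist⟩
  simpa only [Function.comp_apply, hf.dist_eq] using
    hX.dist_sq_le (hγ.map_isometry hf) (f z) ht

theorem IsCAT0Space.of_isometryEquiv (hX : IsCAT0Space X) (f : Y ≃ᵢ X) : IsCAT0Space Y := by
  refine hX.of_isometry f.isometry fun x y => ?_
  obtain ⟨γ, hγ⟩ := hX.1.exists_isGeodesicPath (f x) (f y)
  have h_map := hγ.map_isometry f.symm.isometry
  rw [f.symm_apply_apply, f.symm_apply_apply] at h_map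
  exact ⟨_, h_map.apply_zero, h_map.apply_one, h_map.dist_eq⟩

theorem IsGeodesicallyConvex.isCAT0Space {S : Set X} (hS : IsGeodesicallyConvex S)
    (hX : IsCAT0Space X) : IsCAT0Space S :=
  hX.of_isometry isometry_subtype_coe hS.isGeodesicSpace

theorem IsCAT0Space.dist_le_max (hX : IsCAT0Space X) {γ : ℝ → X} {x y : X}
    (hγ : IsGeodesicPath γ x y) (z : X) {t : ℝ} (ht : t ∈ Set.Icc 0 1) :
    dist z (γ t) ≤ max (dist z x) (dist z y) := by
  obtain ⟨ht_zero, ht_one⟩ := ht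
  refine le_of_sq_le_sq ?_ (le_max_of_le_left dist_nonneg)
  calc dist z (γ t) ^ 2
      ≤ (1 - t) * dist z x ^ 2 + t * dist z y ^ 2 - t * (1 - t) * dist x y ^ 2 :=
        hX.dist_sq_le hγ z ⟨ht_zero, ht_one⟩
    _ ≤ (1 - t) * dist z x ^ 2 + t * dist z y ^ 2 :=
        sub_le_self _ (by have := sub_nonneg.2 ht_one; positivity)
    _ ≤ (1 - t) * max (dist z x) (dist z y) ^ 2 + t * max (dist z x) (dist z y) ^ 2 := by
        have := sub_nonneg.2 ht_one
        gcongr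
        exacts [le_max_left _ _, le_max_right _ _]
    _ = max (dist z x) (dist z y) ^ 2 := by ring

/-- The closed ball of radius `1 / θ - 1` around `a` if `0 < θ`, and the whole space if `θ = 0`:
it interpolates between the space and the point `a` as `θ` moves from `0` to `1`. -/
def scaledBall (a : X) (θ : ℝ) : Set X :=
  {x | θ * (dist a x + 1) ≤ 1}

theorem isClosed_scaledBall (a : X) (θ : ℝ) : IsClosed (scaledBall a θ) :=
  isClosed_le (by fun_prop) continuous_const

theorem scaledBall_zero (a : X) : scaledBall a 0 = Set.univ := by
  simp [scaledBall]

theorem scaledBall_one (a : X) : scaledBall a 1 = {a} := by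
  ext x
  simp [scaledBall, eq_comm, dist_nonneg.ge_iff_eq']

theorem center_mem_scaledBall (a : X) {θ : ℝ} (hθ : θ ≤ 1) : a ∈ scaledBall a θ := by
  simpa [scaledBall] using hθ

theorem IsCAT0Space.isGeodesicallyConvex_scaledBall (hX : IsCAT0Space X) (a : X) {θ : ℝ}
    (hθ : 0 ≤ θ) : IsGeodesicallyConvex (scaledBall a θ) := by
  intro x hx y hy
  obtain ⟨γ, hγ⟩ := hX.1.exists_isGeodesicPath x y
  refine ⟨γ, hγ, fun t ht => ?_⟩
  have h_max : θ * (dist a (γ t) + 1) ≤ θ * (max (dist a x) (dist a y) + 1) := by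
    gcongr
    exact hX.dist_le_max hγ a ht
  rcases max_choice (dist a x) (dist a y) with h_eq | h_eq <;> rw [h_eq] at h_max
  exacts [h_max.trans hx, h_max.trans hy]

theorem le_radius_add_of_mul_le_one {θ θ' d R : ℝ} (hd : 0 ≤ d) (hdR : d ≤ R)
    (hθ' : 0 < θ') (h_le : θ * (d + 1) ≤ 1) (h_ge : 1 ≤ θ' * (d + 1)) :
    d ≤ 1 / θ' - 1 + (R + 1) ^ 2 * |θ - θ'| := by
  have h_excess : θ' * (d + 1) - 1 ≤ |θ - θ'| * (d + 1) := by
    calc θ' * (d + 1) - 1 ≤ (θ' - θ) * (d + 1) := by linarith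
      _ ≤ |θ - θ'| * (d + 1) := by
          rw [abs_sub_comm]
          gcongr
          exact le_abs_self _
  have h_radius : 1 / θ' ≤ d + 1 := by
    rw [div_le_iff₀ hθ']
    linarith
  calc d = 1 / θ' - 1 + 1 / θ' * (θ' * (d + 1) - 1) := by field_simp; ring
    _ ≤ 1 / θ' - 1 + (d + 1) * (|θ - θ'| * (d + 1)) := by
        gcongr
    _ = 1 / θ' - 1 + (d + 1) ^ 2 * |θ - θ'| := by ring
    _ ≤ 1 / θ' - 1 + (R + 1) ^ 2 * |θ - θ'| := by gcongr

theorem IsGeodesicSpace.exists_mem_scaledBall (hX : IsGeodesicSpace X) {a x : X} {θ θ' R : ℝ}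
    (hθ' : θ' ∈ Set.Icc (0 : ℝ) 1) (hx : x ∈ scaledBall a θ) (hR : dist a x ≤ R) :
    ∃ x' ∈ scaledBall a θ', dist x x' ≤ (R + 1) ^ 2 * |θ - θ'| := by
  rcases le_or_gt (θ' * (dist a x + 1)) 1 with h_mem | h_notMem
  · exact ⟨x, h_mem, by rw [dist_self]; positivity⟩
  have hθ'_pos : 0 < θ' := by
    by_contra! h_le
    nlinarith [dist_nonneg (x := a) (y := x)]
  have h_radius : 0 ≤ 1 / θ' - 1 := sub_nonneg.2 ((one_le_div hθ'_pos).2 hθ'.2)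
  obtain ⟨x', hx', h_move⟩ := hX.exists_dist_le_of_dist_le_add h_radius (by positivity)
    (le_radius_add_of_mul_le_one dist_nonneg hR hθ'_pos hx h_notMem.le)
  refine ⟨x', ?_, h_move⟩
  calc θ' * (dist a x' + 1) ≤ θ' * (1 / θ' - 1 + 1) := by gcongr
    _ = 1 := by field_simp; ring

end CAT0

section InnerProductSpace

theorem isGeodesicPath_lineMap {V : Type*} [NormedAddCommGroup V] [NormedSpace ℝ V] (x y : V) :
    IsGeodesicPath (AffineMap.lineMap x y) x y where
  apply_zero := AffineMap.lineMap_apply_zero x y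
  apply_one := AffineMap.lineMap_apply_one x y
  dist_eq s _ t _ := by rw [dist_lineMap_lineMap, Real.dist_eq]

variable {V : Type*} [NormedAddCommGroup V] [InnerProductSpace ℝ V]

theorem dist_lineMap_sq (x y z : V) (t : ℝ) :
    dist z (AffineMap.lineMap x y t) ^ 2 =
      (1 - t) * dist z x ^ 2 + t * dist z y ^ 2 - t * (1 - t) * dist x y ^ 2 := by
  have h_line : z - AffineMap.lineMap x y t = (1 - t) • (z - x) + t • (z - y) := by
    rw [AffineMap.lineMap_apply_module']
    module
  have h_side : x - y = (z - y) - (z - x) := by abel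
  simp only [dist_eq_norm, h_line, h_side, norm_add_sq_real, norm_sub_sq_real (z - y), norm_smul,
    inner_smul_left, inner_smul_right, mul_pow, Real.norm_eq_abs, sq_abs,
    real_inner_comm (z - x) (z - y), conj_trivial]
  ring

variable (V) in
theorem isCAT0Space_of_innerProductSpace : IsCAT0Space V :=
  isCAT0Space_of_exists_isGeodesicPath fun x y =>
    ⟨_, isGeodesicPath_lineMap x y, fun z t _ => (dist_lineMap_sq x y z t).le⟩

theorem isGeodesicallyConvex_of_convex {S : Set V} (hS : Convex ℝ S) : IsGeodesicallyConvex S :=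
  fun x hx y hy => ⟨_, isGeodesicPath_lineMap x y, fun _ ht => hS.lineMap_mem hx hy ht⟩

end InnerProductSpace

section L2Product

variable {ι : Type*} [Fintype ι] {X : ι → Type*} [∀ i, MetricSpace (X i)]
  {α β : Type*} [MetricSpace α] [MetricSpace β]

theorem piLp_two_dist_sq (p q : PiLp 2 X) : dist p q ^ 2 = ∑ i, dist (p i) (q i) ^ 2 := by
  rw [PiLp.dist_eq_sum (by norm_num), ← Real.rpow_natCast, ← Real.rpow_mul (by positivity)]
  norm_num

theorem withLp_two_prod_dist_sq (p q : WithLp 2 (α × β)) :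
    dist p q ^ 2 = dist p.fst q.fst ^ 2 + dist p.snd q.snd ^ 2 := by
  rw [WithLp.prod_dist_eq_add (by norm_num), ← Real.rpow_natCast, ← Real.rpow_mul (by positivity)]
  norm_num

theorem IsGeodesicPath.piLp {γ : ∀ i, ℝ → X i} {p q : PiLp 2 X}
    (hγ : ∀ i, IsGeodesicPath (γ i) (p i) (q i)) :
    IsGeodesicPath (fun t => (WithLp.toLp 2 fun i => γ i t : PiLp 2 X)) p q where
  apply_zero := PiLp.ext fun i => (hγ i).apply_zero
  apply_one := PiLp.ext fun i => (hγ i).apply_one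
  dist_eq s hs t ht := by
    rw [← sq_eq_sq₀ dist_nonneg (by positivity), mul_pow, piLp_two_dist_sq, piLp_two_dist_sq p,
      Finset.mul_sum]
    exact Finset.sum_congr rfl fun i _ => by rw [(hγ i).dist_eq s hs t ht, mul_pow]

theorem IsGeodesicPath.withLpProd {γ : ℝ → α} {γ' : ℝ → β} {p q : WithLp 2 (α × β)}
    (hγ : IsGeodesicPath γ p.fst q.fst) (hγ' : IsGeodesicPath γ' p.snd q.snd) :
    IsGeodesicPath (fun t => WithLp.toLp 2 (γ t, γ' t)) p q where
  apply_zero := WithLp.ofLp_injective 2 (Prod.ext hγ.apply_zero hγ'.apply_zero)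
  apply_one := WithLp.ofLp_injective 2 (Prod.ext hγ.apply_one hγ'.apply_one)
  dist_eq s hs t ht := by
    rw [← sq_eq_sq₀ dist_nonneg (by positivity), mul_pow, withLp_two_prod_dist_sq,
      withLp_two_prod_dist_sq p, mul_add, ← mul_pow, ← mul_pow, ← hγ.dist_eq s hs t ht,
      ← hγ'.dist_eq s hs t ht]
    rfl

theorem isCAT0Space_piLp (hX : ∀ i, IsCAT0Space (X i)) : IsCAT0Space (PiLp 2 X) := by
  refine isCAT0Space_of_exists_isGeodesicPath fun p q => ?_
  choose γ hγ using fun i => (hX i).1.exists_isGeodesicPath (p i) (q i)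
  refine ⟨_, IsGeodesicPath.piLp hγ, fun z t ht => ?_⟩
  simp only [piLp_two_dist_sq, Finset.mul_sum, ← Finset.sum_add_distrib,
    ← Finset.sum_sub_distrib]
  exact Finset.sum_le_sum fun i _ => (hX i).dist_sq_le (hγ i) (z i) ht

theorem IsCAT0Space.withLpProd (hα : IsCAT0Space α) (hβ : IsCAT0Space β) :
    IsCAT0Space (WithLp 2 (α × β)) := by
  refine isCAT0Space_of_exists_isGeodesicPath fun p q => ?_
  obtain ⟨γ, hγ⟩ := hα.1.exists_isGeodesicPath p.fst q.fst
  obtain ⟨γ', hγ'⟩ := hβ.1.exists_isGeodesicPath p.snd q.snd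
  refine ⟨_, hγ.withLpProd hγ', fun z t ht => ?_⟩
  simp only [withLp_two_prod_dist_sq, WithLp.toLp_fst, WithLp.toLp_snd]
  linarith [hα.dist_sq_le hγ z.fst ht, hβ.dist_sq_le hγ' z.snd ht]

theorem isGeodesicallyConvex_piLp {S : ∀ i, Set (X i)} (hS : ∀ i, IsGeodesicallyConvex (S i)) :
    IsGeodesicallyConvex {p : PiLp 2 X | ∀ i, p i ∈ S i} := by
  intro p hp q hq
  choose γ hγ hγ_mem using fun i => hS i (p i) (hp i) (q i) (hq i)
  exact ⟨_, IsGeodesicPath.piLp hγ, fun t ht i => hγ_mem i t ht⟩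

theorem IsGeodesicallyConvex.withLpProd {S : Set α} {T : Set β} (hS : IsGeodesicallyConvex S)
    (hT : IsGeodesicallyConvex T) :
    IsGeodesicallyConvex {p : WithLp 2 (α × β) | p.fst ∈ S ∧ p.snd ∈ T} := by
  rintro p ⟨hpS, hpT⟩ q ⟨hqS, hqT⟩
  obtain ⟨γ, hγ, hγ_mem⟩ := hS _ hpS _ hqS
  obtain ⟨γ', hγ', hγ'_mem⟩ := hT _ hpT _ hqT
  exact ⟨_, hγ.withLpProd hγ', fun t ht => ⟨hγ_mem t ht, hγ'_mem t ht⟩⟩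

theorem withLp_two_prod_dist_fst_le (p q : WithLp 2 (α × β)) :
    dist p.fst q.fst ≤ dist p q :=
  le_of_sq_le_sq (by rw [withLp_two_prod_dist_sq p]; linarith [sq_nonneg (dist p.snd q.snd)])
    dist_nonneg

instance [∀ i, ProperSpace (X i)] : ProperSpace (PiLp 2 X) :=
  (PiLp.antilipschitzWith_toLp 2 X).properSpace (PiLp.continuous_toLp 2 X)
    (WithLp.toLp_surjective 2)

instance [ProperSpace α] [ProperSpace β] : ProperSpace (WithLp 2 (α × β)) :=
  (WithLp.prod_antilipschitzWith_toLp 2 α β).properSpace (WithLp.prod_continuous_toLp 2 α β)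
    (WithLp.toLp_surjective 2)

theorem properSpace_of_snd_mem_isCompact [ProperSpace α] {S : Set (WithLp 2 (α × β))}
    (hS : IsClosed S) {K : Set β} (hK : IsCompact K) (hSK : ∀ p ∈ S, p.snd ∈ K) :
    ProperSpace S := by
  refine ⟨fun p R => hS.isClosedEmbedding_subtypeVal.isCompact_iff.2 ?_⟩
  have h_compact : IsCompact
      (WithLp.homeomorphProd 2 α β ⁻¹' closedBall p.1.fst R ×ˢ K) :=
    (WithLp.homeomorphProd 2 α β).isCompact_preimage.2 ((isCompact_closedBall _ _).prod hK)
  refine h_compact.of_isClosed_subset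
    (hS.isClosedEmbedding_subtypeVal.isClosedMap _ isClosed_closedBall) ?_
  rintro _ ⟨q, hq, rfl⟩
  exact ⟨(withLp_two_prod_dist_fst_le q.1 p.1).trans hq, hSK q q.2⟩

end L2Product

section HilbertSum

variable {κ : Type*} {E : κ → Type*} [∀ m, NormedAddCommGroup (E m)]

theorem lp_two_hasSum_dist_sq (z w : lp E 2) :
    HasSum (fun m => dist (z m) (w m) ^ 2) (dist z w ^ 2) := by
  simpa [dist_eq_norm] using lp.hasSum_norm (p := 2) (by norm_num) (z - w)

theorem memℓp_two_of_norm_le {c : κ → ℝ} (hc : Summable fun m => c m ^ 2) {z : ∀ m, E m}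
    (hz : ∀ m, ‖z m‖ ≤ c m) : Memℓp z 2 := by
  refine memℓp_gen (hc.of_nonneg_of_le (fun m => by positivity) fun m => ?_)
  simpa using pow_le_pow_left₀ (norm_nonneg _) (hz m) 2

theorem continuous_lp_two_of_norm_le {T : Type*} [TopologicalSpace T] {c : κ → ℝ}
    (hc : Summable fun m => c m ^ 2) {f : T → lp E 2} (hf : ∀ m, Continuous fun t => f t m)
    (hf_le : ∀ t m, ‖f t m‖ ≤ c m) : Continuous f := by
  refine continuous_iff_continuousAt.2 fun t₀ => tendsto_iff_dist_tendsto_zero.2 ?_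
  have h_sq : Continuous fun t => ∑' m, dist (f t m) (f t₀ m) ^ 2 := by
    refine continuous_tsum (fun m => ((hf m).dist continuous_const).pow 2) (hc.mul_left 4)
      fun m t => ?_
    have h_dist : dist (f t m) (f t₀ m) ≤ 2 * c m := by
      linarith [dist_le_norm_add_norm (f t m) (f t₀ m), hf_le t m, hf_le t₀ m]
    rw [Real.norm_of_nonneg (by positivity)]
    calc dist (f t m) (f t₀ m) ^ 2 ≤ (2 * c m) ^ 2 := by gcongr
      _ = 4 * c m ^ 2 := by ring
  simpa [(lp_two_hasSum_dist_sq _ _).tsum_eq, Real.sqrt_sq dist_nonneg] using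
    (h_sq.sqrt).tendsto t₀

/-- The product of the closed balls of radius `r m` inside a Hilbert sum; for square-summable `r`
and locally compact summands it is compact, like the Hilbert cube. -/
def hilbertBox (r : κ → ℝ) : Set (lp E 2) :=
  {z | ∀ m, ‖z m‖ ≤ r m}

theorem zero_mem_hilbertBox {r : κ → ℝ} (hr : ∀ m, 0 ≤ r m) : (0 : lp E 2) ∈ hilbertBox r :=
  fun m => by simpa using hr m

theorem isClosed_hilbertBox (r : κ → ℝ) : IsClosed (hilbertBox (E := E) r) := by
  simp only [hilbertBox, Set.ofPred_forall]
  exact isClosed_iInter fun m =>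
    isClosed_le (lp.lipschitzWith_one_eval 2 m).continuous.norm continuous_const

theorem isCompact_hilbertBox [∀ m, ProperSpace (E m)] {r : κ → ℝ}
    (hr : Summable fun m => r m ^ 2) : IsCompact (hilbertBox (E := E) r) := by
  have : ∀ m, CompactSpace (closedBall (0 : E m) (r m)) := fun m =>
    isCompact_iff_compactSpace.1 (isCompact_closedBall _ _)
  have h_le : ∀ (k : ∀ m, closedBall (0 : E m) (r m)) m, ‖(k m : E m)‖ ≤ r m :=
    fun k m => mem_closedBall_zero_iff.1 (k m).2
  let f : (∀ m, closedBall (0 : E m) (r m)) → lp E 2 :=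
    fun k => ⟨fun m => k m, memℓp_two_of_norm_le hr (h_le k)⟩
  have hf : Continuous f := continuous_lp_two_of_norm_le hr
    (fun m => continuous_subtype_val.comp (continuous_apply m)) h_le
  convert isCompact_range hf
  ext z
  exact ⟨fun hz => ⟨fun m => ⟨z m, mem_closedBall_zero_iff.2 (hz m)⟩, rfl⟩,
    by rintro ⟨k, rfl⟩; exact h_le k⟩

theorem convex_hilbertBox [∀ m, NormedSpace ℝ (E m)] (r : κ → ℝ) :
    Convex ℝ (hilbertBox (E := E) r) := by
  intro z hz w hw s t hs ht hst m
  exact mem_closedBall_zero_iff.1 (convex_closedBall (0 : E m) (r m)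
    (mem_closedBall_zero_iff.2 (hz m)) (mem_closedBall_zero_iff.2 (hw m)) hs ht hst)

end HilbertSum

section Interpolation

variable {ι : Type*} {X : ι → Type*} [∀ i, MetricSpace (X i)]
  {E : ℕ → Type*} [∀ m, NormedAddCommGroup (E m)]

/-- The radius of the `m`-th block, square-summable and decaying fast enough for the blocks after
the `m`-th one to be negligible compared with it. -/
noncomputable def blockRadius (m : ℕ) : ℝ :=
  (1 / 4) ^ m

theorem blockRadius_pos (m : ℕ) : 0 < blockRadius m := by
  unfold blockRadius; positivity

theorem blockRadius_le_one (m : ℕ) : blockRadius m ≤ 1 :=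
  pow_le_one₀ (by norm_num) (by norm_num)

theorem blockRadius_succ (m : ℕ) : blockRadius (m + 1) = blockRadius m / 4 := by
  rw [blockRadius, blockRadius, pow_succ]; ring

theorem hasSum_blockRadius_sq_tail (m : ℕ) :
    HasSum (fun j => blockRadius (j + m) ^ 2) (16 / 15 * blockRadius m ^ 2) := by
  have h_term : ∀ j, blockRadius (j + m) ^ 2 = blockRadius m ^ 2 * (1 / 16) ^ j := fun j => by
    have h_pow : ((1 / 4 : ℝ) ^ j) ^ 2 = (1 / 16) ^ j := by
      rw [← pow_mul, mul_comm, pow_mul]; norm_num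
    simp only [blockRadius, pow_add, mul_pow, h_pow]
    ring
  have h_sum : 16 / 15 * blockRadius m ^ 2 = blockRadius m ^ 2 * (1 - 1 / 16)⁻¹ := by ring
  simp only [h_term, h_sum]
  exact (hasSum_geometric_of_lt_one (by norm_num) (by norm_num)).mul_left _

theorem summable_blockRadius_sq : Summable fun m => blockRadius m ^ 2 :=
  (hasSum_blockRadius_sq_tail 0).summable

variable (X E) in
/-- The space in which all interpolating spaces live: the `ℓ²`-product of the given spaces and of
the Hilbert sum of the blocks `E m`. -/
abbrev Ambient : Type _ :=
  WithLp 2 (PiLp 2 X × lp E 2)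

/-- The point of the ambient space with coordinates `p` and blocks `z`. -/
def Ambient.mk (p : ∀ i, X i) (z : lp E 2) : Ambient X E :=
  WithLp.toLp 2 (WithLp.toLp 2 p, z)

/-- The underlying set of an interpolating space: the coordinate in `X i` is restricted to a ball
that shrinks from all of `X i` to `{a i}` as `θ i` runs from `0` to `1`, while the `m`-th block is
a ball that opens up as `φ m` runs from `0` to `1`. -/
def interpolantSet (a : ∀ i, X i) (θ : ι → I) (φ : ℕ → I) : Set (Ambient X E) :=
  {y | y.fst ∈ {p : PiLp 2 X | ∀ i, p i ∈ scaledBall (a i) (θ i)} ∧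
    y.snd ∈ hilbertBox fun m => φ m * blockRadius m}

theorem mul_blockRadius_le (s : I) (m : ℕ) : s * blockRadius m ≤ blockRadius m :=
  mul_le_of_le_one_left (blockRadius_pos m).le s.2.2

theorem isClosed_interpolantSet (a : ∀ i, X i) (θ : ι → I) (φ : ℕ → I) :
    IsClosed (interpolantSet (E := E) a θ φ) := by
  have h_fst : IsClosed {p : PiLp 2 X | ∀ i, p i ∈ scaledBall (a i) (θ i)} := by
    simp only [Set.ofPred_forall]
    exact isClosed_iInter fun i =>
      (isClosed_scaledBall (a i) (θ i)).preimage (PiLp.continuous_apply 2 X i)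
  exact (h_fst.preimage (WithLp.continuous_fst 2 _ _)).inter
    ((isClosed_hilbertBox _).preimage (WithLp.continuous_snd 2 _ _))

theorem mk_zero_mem_interpolantSet (a : ∀ i, X i) (θ : ι → I) (φ : ℕ → I) :
    Ambient.mk a (0 : lp E 2) ∈ interpolantSet a θ φ :=
  ⟨fun i => center_mem_scaledBall (a i) (θ i).2.2,
    zero_mem_hilbertBox fun m => mul_nonneg (φ m).2.1 (blockRadius_pos m).le⟩

variable [Fintype ι]

theorem Ambient.dist_sq (y y' : Ambient X E) :
    dist y y' ^ 2 = ∑ i, dist (y.fst i) (y'.fst i) ^ 2 + dist y.snd y'.snd ^ 2 := by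
  rw [withLp_two_prod_dist_sq, piLp_two_dist_sq]

theorem Ambient.dist_fst_le (y y' : Ambient X E) (i : ι) :
    dist (y.fst i) (y'.fst i) ≤ dist y y' := by
  refine le_trans (abs_le_of_sq_le_sq' ?_ dist_nonneg).2 (withLp_two_prod_dist_fst_le y y')
  rw [piLp_two_dist_sq]
  exact Finset.single_le_sum (f := fun i => dist (y.fst i) (y'.fst i) ^ 2)
    (fun _ _ => sq_nonneg _) (Finset.mem_univ i)

instance [∀ i, ProperSpace (X i)] [∀ m, ProperSpace (E m)] (a : ∀ i, X i) (θ : ι → I)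
    (φ : ℕ → I) : ProperSpace (interpolantSet (E := E) a θ φ) :=
  properSpace_of_snd_mem_isCompact (isClosed_interpolantSet a θ φ)
    (isCompact_hilbertBox summable_blockRadius_sq)
    fun _ hy m => (hy.2 m).trans (mul_blockRadius_le (φ m) m)

variable [∀ m, InnerProductSpace ℝ (E m)]

theorem isCAT0Space_interpolantSet (hX : ∀ i, IsCAT0Space (X i)) (a : ∀ i, X i) (θ : ι → I)
    (φ : ℕ → I) : IsCAT0Space (interpolantSet (E := E) a θ φ) :=
  IsGeodesicallyConvex.isCAT0Space
    ((isGeodesicallyConvex_piLp fun i =>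
      (hX i).isGeodesicallyConvex_scaledBall (a i) (θ i).2.1).withLpProd
        (isGeodesicallyConvex_of_convex (convex_hilbertBox _)))
    ((isCAT0Space_piLp hX).withLpProd (isCAT0Space_of_innerProductSpace _))

/-- Bounds the square of the distance by which a point of one interpolating space, at distance at
most `R` from the base point, has to be moved in order to lie in the other one. -/
noncomputable def parameterGap (R : ℝ) (p q : (ι → I) × (ℕ → I)) : ℝ :=
  ∑ i, ((R + 1) ^ 2 * dist (p.1 i) (q.1 i)) ^ 2 +
    ∑' m, (dist (p.2 m) (q.2 m) * blockRadius m) ^ 2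

theorem dist_mul_blockRadius_sq_le (s t : I) (m : ℕ) :
    (dist s t * blockRadius m) ^ 2 ≤ blockRadius m ^ 2 := by
  have h_dist : dist s t ≤ 1 := Real.dist_le_of_mem_Icc_01 s.2 t.2
  have h_pos := blockRadius_pos m
  gcongr
  exact mul_le_of_le_one_left h_pos.le h_dist

theorem summable_dist_mul_blockRadius_sq (φ φ' : ℕ → I) :
    Summable fun m => (dist (φ m) (φ' m) * blockRadius m) ^ 2 :=
  summable_blockRadius_sq.of_nonneg_of_le (fun _ => sq_nonneg _)
    fun m => dist_mul_blockRadius_sq_le (φ m) (φ' m) m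

theorem parameterGap_self (R : ℝ) (p : (ι → I) × (ℕ → I)) : parameterGap R p p = 0 := by
  simp [parameterGap]

theorem parameterGap_comm (R : ℝ) (p q : (ι → I) × (ℕ → I)) :
    parameterGap R p q = parameterGap R q p := by
  simp only [parameterGap, dist_comm]

theorem continuous_parameterGap_right (R : ℝ) (p : (ι → I) × (ℕ → I)) :
    Continuous (parameterGap R p) := by
  refine .add (by fun_prop) (continuous_tsum (fun m => by fun_prop) summable_blockRadius_sq
    fun m q => ?_)
  rw [Real.norm_of_nonneg (sq_nonneg _)]
  exact dist_mul_blockRadius_sq_le _ _ m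

theorem exists_mem_hilbertBox_dist_sq_le {φ : ℕ → I} (φ' : ℕ → I) {z : lp E 2}
    (hz : z ∈ hilbertBox fun m => φ m * blockRadius m) :
    ∃ z' ∈ hilbertBox (E := E) fun m => φ' m * blockRadius m,
      dist z z' ^ 2 ≤ ∑' m, (dist (φ m) (φ' m) * blockRadius m) ^ 2 := by
  have h_block : ∀ m, ∃ w : E m, ‖w‖ ≤ φ' m * blockRadius m ∧
      dist (z m) w ≤ dist (φ m) (φ' m) * blockRadius m := fun m => by
    have h_pos := blockRadius_pos m
    have h_abs : (φ m : ℝ) ≤ φ' m + dist (φ m) (φ' m) :=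
      sub_le_iff_le_add'.1 (le_abs_self _)
    simpa only [dist_zero_left] using
      (isCAT0Space_of_innerProductSpace (E m)).1.exists_dist_le_of_dist_le_add (a := 0)
        (p := z m) (mul_nonneg (φ' m).2.1 h_pos.le) (mul_nonneg dist_nonneg h_pos.le)
        (by
          rw [dist_zero_left, ← add_mul]
          exact (hz m).trans (mul_le_mul_of_nonneg_right h_abs h_pos.le))
  choose w hw hzw using h_block
  let z' : lp E 2 := ⟨w, memℓp_two_of_norm_le summable_blockRadius_sq fun m =>
    (hw m).trans (mul_blockRadius_le (φ' m) m)⟩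
  refine ⟨z', hw, ?_⟩
  rw [← (lp_two_hasSum_dist_sq z z').tsum_eq]
  exact (lp_two_hasSum_dist_sq z z').summable.tsum_le_tsum
    (fun m => pow_le_pow_left₀ dist_nonneg (hzw m) 2) (summable_dist_mul_blockRadius_sq φ φ')

theorem exists_mem_interpolantSet_dist_sq_le (hX : ∀ i, IsGeodesicSpace (X i)) {a : ∀ i, X i}
    {p : (ι → I) × (ℕ → I)} (q : (ι → I) × (ℕ → I)) {R : ℝ} {y : Ambient X E}
    (hy : y ∈ interpolantSet a p.1 p.2) (hR : dist (Ambient.mk a 0) y ≤ R) :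
    ∃ y' ∈ interpolantSet a q.1 q.2, dist y y' ^ 2 ≤ parameterGap R p q := by
  choose x' hx' h_dist using fun i => (hX i).exists_mem_scaledBall (q.1 i).2 (hy.1 i)
    ((Ambient.dist_fst_le (Ambient.mk a 0) y i).trans hR)
  obtain ⟨z', hz', h_dist'⟩ := exists_mem_hilbertBox_dist_sq_le q.2 hy.2
  refine ⟨Ambient.mk x' z', ⟨hx', hz'⟩, ?_⟩
  rw [Ambient.dist_sq]
  exact add_le_add
    (Finset.sum_le_sum fun i _ => pow_le_pow_left₀ dist_nonneg (h_dist i) 2) h_dist'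

theorem pghDistOf_interpolantSet_le (hX : ∀ i, IsGeodesicSpace (X i)) (a : ∀ i, X i)
    {p q : (ι → I) × (ℕ → I)} {t : ℝ} (ht : 0 < t) (h_gap : parameterGap t⁻¹ p q < t ^ 2) :
    pghDistOf (interpolantSet (E := E) a p.1 p.2) (interpolantSet (E := E) a q.1 q.2)
      ⟨_, mk_zero_mem_interpolantSet a p.1 p.2⟩ ⟨_, mk_zero_mem_interpolantSet a q.1 q.2⟩ ≤ t := by
  have h_lt : ∀ {p q : (ι → I) × (ℕ → I)} {y : Ambient X E}, parameterGap t⁻¹ p q < t ^ 2 →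
      y ∈ interpolantSet a p.1 p.2 → dist (Ambient.mk a 0) y ≤ t⁻¹ →
      ∃ y' ∈ interpolantSet a q.1 q.2, dist y y' < t := by
    intro p q y h_gap hy h_le
    obtain ⟨y', hy', h_dist⟩ := exists_mem_interpolantSet_dist_sq_le hX q hy h_le
    exact ⟨y', hy', lt_of_pow_lt_pow_left₀ 2 ht.le (h_dist.trans_lt h_gap)⟩
  refine pghDistOf_le_of_isometry isometry_subtype_coe isometry_subtype_coe rfl ht
    (fun y h_le => ?_) fun y h_le => ?_
  · obtain ⟨y', hy', h_dist⟩ := h_lt h_gap y.2 h_le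
    exact ⟨⟨y', hy'⟩, h_dist⟩
  · obtain ⟨y', hy', h_dist⟩ := h_lt (parameterGap_comm _ p q ▸ h_gap) y.2 h_le
    exact ⟨⟨y', hy'⟩, dist_comm y.1 y' ▸ h_dist⟩

end Interpolation

section Separation

/-- Among any `N` points of `s` there are two at distance less than `ε`. -/
def IsPackingBound {α : Type*} [PseudoMetricSpace α] (s : Set α) (ε : ℝ) (N : ℕ) : Prop :=
  ∀ u : Fin N → α, (∀ k, u k ∈ s) → ∃ k l, k ≠ l ∧ dist (u k) (u l) < ε

theorem exists_isPackingBound {α : Type*} [PseudoMetricSpace α] {s : Set α}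
    (hs : TotallyBounded s) {ε : ℝ} (hε : 0 < ε) :
    ∃ N, IsPackingBound s ε N := by
  obtain ⟨t, ht, h_cover⟩ := Metric.totallyBounded_iff.1 hs (ε / 2) (half_pos hε)
  refine ⟨ht.toFinset.card + 1, fun u hu => ?_⟩
  have h_near : ∀ k, ∃ x ∈ ht.toFinset, dist (u k) x < ε / 2 := by
    simpa using fun k => h_cover (hu k)
  choose x hx h_dist using h_near
  obtain ⟨k, -, l, -, h_ne, h_eq⟩ := Finset.exists_ne_map_eq_of_card_lt_of_maps_to
    (s := Finset.univ) (by simp) fun k _ => hx k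
  have h_dist_l : dist (u l) (x k) < ε / 2 := by simpa only [h_eq] using h_dist l
  exact ⟨k, l, h_ne, by linarith [dist_triangle_right (u k) (u l) (x k), h_dist k]⟩

theorem exists_seq_of_forall_exists {β : Type*} {P : ∀ m, (Fin m → β) → β → Prop}
    (h : ∀ m d, ∃ b, P m d b) : ∃ D : ℕ → β, ∀ m, P m (fun j => D j) (D m) := by
  choose G hG using h
  refine ⟨Nat.strongRec fun m D => G m fun j => D j j.2, fun m => ?_⟩
  beta_reduce
  rw [Nat.strongRec_eq]
  exact hG m _

variable {ι : Type*} {X : ι → Type*} {a : ∀ i, X i}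
  {E : ℕ → Type*} [∀ m, NormedAddCommGroup (E m)]

/-- The part of a point of the ambient space before the `m`-th block. -/
def Ambient.truncate (m : ℕ) (y : Ambient X E) :
    WithLp 2 (PiLp 2 X × PiLp 2 fun j : Fin m => E j) :=
  WithLp.toLp 2 (y.fst, WithLp.toLp 2 fun j => y.snd j)

theorem Ambient.truncate_mk_zero (m : ℕ) :
    (Ambient.mk a (0 : lp E 2)).truncate m = WithLp.toLp 2 (WithLp.toLp 2 a, 0) :=
  rfl

variable [∀ i, MetricSpace (X i)]

theorem mk_single_mem_interpolantSet {m : ℕ} (θ : ι → I) {φ : ℕ → I} (hφ : φ m = 1)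
    {v : E m} (hv : ‖v‖ ≤ blockRadius m) :
    Ambient.mk a (lp.single 2 m v) ∈ interpolantSet a θ φ := by
  refine ⟨fun i => center_mem_scaledBall (a i) (θ i).2.2, fun j => ?_⟩
  rcases eq_or_ne j m with rfl | h_ne
  · simpa [Ambient.mk, hφ] using hv
  · simpa [Ambient.mk, h_ne] using mul_nonneg (φ j).2.1 (blockRadius_pos j).le

variable [Fintype ι]

theorem Ambient.dist_sq_eq_truncate_add_tsum (m : ℕ) (y y' : Ambient X E) :
    dist y y' ^ 2 = dist (y.truncate m) (y'.truncate m) ^ 2 +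
      ∑' j, dist (y.snd (j + m)) (y'.snd (j + m)) ^ 2 := by
  have h_sum := lp_two_hasSum_dist_sq y.snd y'.snd
  rw [withLp_two_prod_dist_sq y, ← h_sum.tsum_eq, ← h_sum.summable.sum_add_tsum_nat_add m,
    ← add_assoc, withLp_two_prod_dist_sq (y.truncate m), piLp_two_dist_sq (y.truncate m).snd,
    Finset.sum_range]
  rfl

theorem Ambient.dist_truncate_le (m : ℕ) (y y' : Ambient X E) :
    dist (y.truncate m) (y'.truncate m) ≤ dist y y' := by
  refine le_of_sq_le_sq ?_ dist_nonneg
  rw [Ambient.dist_sq_eq_truncate_add_tsum m y]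
  exact le_add_of_nonneg_right (tsum_nonneg fun _ => sq_nonneg _)

theorem Ambient.dist_lt_blockRadius {m : ℕ} {y y' : Ambient X E}
    (h_truncate : dist (y.truncate m) (y'.truncate m) < blockRadius m / 2)
    (h_eq : y.snd m = y'.snd m) (h_tail : ∀ j, dist (y.snd j) (y'.snd j) ≤ 2 * blockRadius j) :
    dist y y' < blockRadius m := by
  have h_bound : HasSum (fun j => (2 * blockRadius (j + 1 + m)) ^ 2)
      (4 / 15 * blockRadius m ^ 2) := by
    have h_sum : 4 / 15 * blockRadius m ^ 2 = 4 * (16 / 15 * blockRadius (m + 1) ^ 2) := by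
      rw [blockRadius_succ]; ring
    simpa only [mul_pow, h_sum, show (2 : ℝ) ^ 2 = 4 by norm_num, add_assoc, add_comm 1 m] using
      (hasSum_blockRadius_sq_tail (m + 1)).mul_left 4
  have h_summable := (lp_two_hasSum_dist_sq y.snd y'.snd).summable
  have h_tail_sq : ∑' j, dist (y.snd (j + m)) (y'.snd (j + m)) ^ 2 ≤
      4 / 15 * blockRadius m ^ 2 := by
    rw [((summable_nat_add_iff m).2 h_summable).tsum_eq_zero_add, zero_add, h_eq, dist_self,
      zero_pow two_ne_zero, zero_add, ← h_bound.tsum_eq]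
    exact ((summable_nat_add_iff 1).2 ((summable_nat_add_iff m).2 h_summable)).tsum_le_tsum
      (fun j => pow_le_pow_left₀ dist_nonneg (h_tail _) 2) h_bound.summable
  refine lt_of_pow_lt_pow_left₀ 2 (blockRadius_pos m).le ?_
  rw [Ambient.dist_sq_eq_truncate_add_tsum m]
  calc _ ≤ (blockRadius m / 2) ^ 2 + 4 / 15 * blockRadius m ^ 2 := by gcongr
    _ < blockRadius m ^ 2 := by linarith [pow_pos (blockRadius_pos m) 2]

/-- Among any `N` points within distance `2` of the base point, two almost agree before the `m`-th
block, where `F` is the family of the first `m` blocks. -/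
def BoundsTruncatedPackings (a : ∀ i, X i) {m : ℕ} (F : Fin m → Type*)
    [∀ j, NormedAddCommGroup (F j)] (N : ℕ) : Prop :=
  IsPackingBound
    (closedBall (WithLp.toLp 2 (WithLp.toLp 2 a, 0) : WithLp 2 (PiLp 2 X × PiLp 2 F)) 2)
    (blockRadius m / 2) N

theorem exists_boundsTruncatedPackings [∀ i, ProperSpace (X i)] (a : ∀ i, X i) {m : ℕ}
    (F : Fin m → Type*) [∀ j, NormedAddCommGroup (F j)] [∀ j, ProperSpace (F j)] :
    ∃ N, BoundsTruncatedPackings a F N :=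
  exists_isPackingBound (isCompact_closedBall _ _).totallyBounded (half_pos (blockRadius_pos m))

theorem BoundsTruncatedPackings.exists_ne_dist_lt {m N : ℕ}
    (hN : BoundsTruncatedPackings a (fun j : Fin m => E j) N) {θ : ι → I} {φ : ℕ → I}
    (hφ : φ m = 0) {y : Fin N → Ambient X E} (hy : ∀ k, y k ∈ interpolantSet a θ φ)
    (hy_dist : ∀ k, dist (y k) (Ambient.mk a 0) ≤ 2) :
    ∃ k l, k ≠ l ∧ dist (y k) (y l) < blockRadius m := by
  obtain ⟨k, l, h_ne, h_lt⟩ := hN (fun k => (y k).truncate m) fun k => by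
    rw [← Ambient.truncate_mk_zero]
    exact (Ambient.dist_truncate_le m _ _).trans (hy_dist k)
  have h_zero : ∀ k, (y k).snd m = 0 := fun k => by simpa [hφ] using (hy k).2 m
  have h_norm : ∀ k j, ‖(y k).snd j‖ ≤ blockRadius j := fun k j =>
    ((hy k).2 j).trans (mul_blockRadius_le (φ j) j)
  exact ⟨k, l, h_ne, Ambient.dist_lt_blockRadius h_lt ((h_zero k).trans (h_zero l).symm)
    fun j => (dist_le_norm_add_norm _ _).trans (by linarith [h_norm k j, h_norm l j])⟩

/-- The dimensions `D m` grow so fast that the `m`-th Euclidean block has more orthogonal directions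
than there are well-separated points in the truncation before it. -/
def OutgrowsPackings (a : ∀ i, X i) (D : ℕ → ℕ) : Prop :=
  ∀ m, BoundsTruncatedPackings a (fun j : Fin m => EuclideanSpace ℝ (Fin (D j))) (D m)

theorem exists_outgrowsPackings [∀ i, ProperSpace (X i)] (a : ∀ i, X i) :
    ∃ D, OutgrowsPackings a D :=
  exists_seq_of_forall_exists
    (P := fun _ d N => BoundsTruncatedPackings a (fun j => EuclideanSpace ℝ (Fin (d j))) N)
    fun _ _ => exists_boundsTruncatedPackings a _

theorem isometry_mk_single (a : ∀ i, X i) (m : ℕ) :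
    Isometry fun v : E m => Ambient.mk a (lp.single 2 m v) :=
  Isometry.of_dist_eq fun v w => by
    have h_single : dist (lp.single 2 m v) (lp.single 2 m w) = dist v w := by
      rw [dist_eq_norm, ← lp.single_sub, lp.norm_single (by norm_num), dist_eq_norm]
    rw [← sq_eq_sq₀ dist_nonneg dist_nonneg, Ambient.dist_sq, ← h_single]
    simp [Ambient.mk]

theorem euclideanSpace_dist_single_sq {n : Type*} [Fintype n] [DecidableEq n] {k l : n}
    (h : k ≠ l) (c : ℝ) :
    dist (EuclideanSpace.single k c) (EuclideanSpace.single l c) ^ 2 = 2 * c ^ 2 := by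
  have h_inner : inner ℝ (EuclideanSpace.single k c) (EuclideanSpace.single l c) = 0 := by
    simp [EuclideanSpace.inner_single_left, h]
  rw [dist_eq_norm, norm_sub_sq_real, h_inner, PiLp.norm_single, PiLp.norm_single,
    Real.norm_eq_abs, sq_abs]
  ring

theorem exists_map_of_pghDistOf_interpolantSet_lt {p q : (ι → I) × (ℕ → I)} {m : ℕ} (hp : p.2 m = 1)
    (h_lt : pghDistOf (interpolantSet (E := E) a p.1 p.2) (interpolantSet (E := E) a q.1 q.2)
      ⟨_, mk_zero_mem_interpolantSet a p.1 p.2⟩ ⟨_, mk_zero_mem_interpolantSet a q.1 q.2⟩ <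
        blockRadius m / 5) :
    ∃ g : closedBall (0 : E m) (blockRadius m) → interpolantSet (E := E) a q.1 q.2,
      (∀ v, dist (g v).1 (Ambient.mk a 0) ≤ 2) ∧
      ∀ v w, dist v w < dist (g v) (g w) + 2 / 5 * blockRadius m := by
  have h_pos := blockRadius_pos m
  have h_le_one := blockRadius_le_one m
  obtain ⟨f, hf_base, hf_dist⟩ := exists_map_of_pghDistOf_lt h_lt (by linarith)
  let x : closedBall (0 : E m) (blockRadius m) → interpolantSet (E := E) a p.1 p.2 := fun v =>
    ⟨_, mk_single_mem_interpolantSet p.1 hp (mem_closedBall_zero_iff.1 v.2)⟩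
  have hx_dist : ∀ v, dist ⟨_, mk_zero_mem_interpolantSet a p.1 p.2⟩ (x v) ≤ blockRadius m := by
    intro v
    have h_isometry := (isometry_mk_single a m).dist_eq 0 v.1
    rw [lp.single_zero] at h_isometry
    exact h_isometry.le.trans (dist_comm v.1 0 ▸ v.2)
  have hx_near : ∀ v, dist ⟨_, mk_zero_mem_interpolantSet a p.1 p.2⟩ (x v) ≤
      (blockRadius m / 5)⁻¹ := fun v =>
    (hx_dist v).trans (h_le_one.trans ((one_le_inv₀ (by positivity)).2 (by linarith)))
  refine ⟨f ∘ x, fun v => ?_, fun v w => ?_⟩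
  · rw [dist_comm]
    exact (hf_base _ (hx_near v)).le.trans (by linarith [hx_dist v])
  · have h_lt := hf_dist _ _ (hx_near v) (hx_near w)
    rw [Subtype.dist_eq (x v), (isometry_mk_single a m).dist_eq] at h_lt
    exact h_lt.trans_eq (by simp only [Function.comp_apply]; ring)

theorem OutgrowsPackings.blockRadius_div_five_le_pghDistOf {D : ℕ → ℕ}
    (hD : OutgrowsPackings a D) {p q : (ι → I) × (ℕ → I)} {m : ℕ} (hp : p.2 m = 1)
    (hq : q.2 m = 0) :
    blockRadius m / 5 ≤ pghDistOf
      (interpolantSet (E := fun m => EuclideanSpace ℝ (Fin (D m))) a p.1 p.2)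
      (interpolantSet (E := fun m => EuclideanSpace ℝ (Fin (D m))) a q.1 q.2)
      ⟨_, mk_zero_mem_interpolantSet a p.1 p.2⟩ ⟨_, mk_zero_mem_interpolantSet a q.1 q.2⟩ := by
  by_contra! h_lt
  obtain ⟨g, hg_base, hg_dist⟩ := exists_map_of_pghDistOf_interpolantSet_lt hp h_lt
  have h_pos := blockRadius_pos m
  let e : Fin (D m) → closedBall (0 : EuclideanSpace ℝ (Fin (D m))) (blockRadius m) := fun k =>
    ⟨EuclideanSpace.single k (blockRadius m), by simp [abs_of_pos h_pos]⟩
  obtain ⟨k, l, h_ne, h_close⟩ :=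
    (hD m).exists_ne_dist_lt (E := fun m => EuclideanSpace ℝ (Fin (D m))) hq
      (fun k => (g (e k)).2) fun k => hg_base (e k)
  have h_far : 7 / 5 * blockRadius m ≤ dist (e k) (e l) := by
    refine le_of_sq_le_sq ?_ dist_nonneg
    rw [Subtype.dist_eq, euclideanSpace_dist_single_sq h_ne]
    nlinarith
  linarith [hg_dist (e k) (e l), Subtype.dist_eq (g (e k)) (g (e l))]

end Separation

section Embedding

variable {ι : Type} [Fintype ι] {X : ι → Type} [∀ i, MetricSpace (X i)] [∀ i, ProperSpace (X i)]
  {E : ℕ → Type} [∀ m, NormedAddCommGroup (E m)] [∀ m, ProperSpace (E m)]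

variable (E) in
/-- The interpolating space with parameters `p`, pointed at the common centre of all the balls. -/
noncomputable def interpolant (a : ∀ i, X i) (p : (ι → I) × (ℕ → I)) :
    PointedProperMetricSpace where
  carrier := interpolantSet (E := E) a p.1 p.2
  pt := ⟨_, mk_zero_mem_interpolantSet a p.1 p.2⟩

theorem interpolant_equiv_of_vertex (a : ∀ i, X i) {p : (ι → I) × (ℕ → I)} {i : ι}
    (h_zero : p.1 i = 0) (h_one : ∀ j, j ≠ i → p.1 j = 1) (h_blocks : ∀ m, p.2 m = 0) :
    interpolant E a p ≈ ⟨X i, a i⟩ := by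
  classical
  have h_fst : ∀ y ∈ interpolantSet (E := E) a p.1 p.2, ∀ j, j ≠ i → y.fst j = a j := by
    intro y hy j hji
    simpa only [h_one j hji, Set.Icc.coe_one, scaledBall_one, Set.mem_singleton_iff] using hy.1 j
  have h_snd : ∀ y ∈ interpolantSet (E := E) a p.1 p.2, y.snd = 0 := by
    intro y hy
    refine lp.ext (funext fun m => norm_le_zero_iff.1 ?_)
    simpa only [h_blocks m, Set.Icc.coe_zero, zero_mul] using hy.2 m
  have h_mem : ∀ x, Ambient.mk (Function.update a i x) (0 : lp E 2) ∈
      interpolantSet a p.1 p.2 := by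
    refine fun x => ⟨fun j => ?_, (mk_zero_mem_interpolantSet a p.1 p.2).2⟩
    obtain rfl | hji := eq_or_ne j i
    · simp [h_zero, scaledBall_zero]
    · simpa [Ambient.mk, hji] using center_mem_scaledBall (a j) (p.1 j).2.2
  have h_isometry : Isometry fun y : interpolantSet (E := E) a p.1 p.2 => y.1.fst i := by
    refine Isometry.of_dist_eq fun y y' => (sq_eq_sq₀ dist_nonneg dist_nonneg).1 ?_
    rw [Subtype.dist_eq, Ambient.dist_sq, h_snd y y.2, h_snd y' y'.2, Finset.sum_eq_single i]
    · simp
    · intro j _ hji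
      simp [h_fst y y.2 j hji, h_fst y' y'.2 j hji]
    · simp
  exact ⟨IsometryEquiv.mk' _ (fun x => ⟨_, h_mem x⟩) (fun x => Function.update_self i x a)
    h_isometry, rfl⟩

variable [∀ m, InnerProductSpace ℝ (E m)]

theorem continuous_interpolant (hX : ∀ i, IsGeodesicSpace (X i)) (a : ∀ i, X i) :
    Continuous (interpolant E a) := by
  rw [Metric.continuous_iff']
  intro p ε hε
  have h_gap : ∀ᶠ q in 𝓝 p, parameterGap (ε / 2)⁻¹ p q < (ε / 2) ^ 2 :=
    (continuous_parameterGap_right _ p).continuousAt.eventually_lt_const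
      (by rw [parameterGap_self]; positivity)
  filter_upwards [h_gap] with q hq
  rw [dist_comm]
  exact (pghDistOf_interpolantSet_le hX a (half_pos hε) hq).trans_lt (half_lt_self hε)

theorem mk_interpolant_mem_PGHCat0 (hX : ∀ i, IsCAT0Space (X i)) (a : ∀ i, X i)
    (p : (ι → I) × (ℕ → I)) : Quotient.mk pointedIsometrySetoid (interpolant E a p) ∈ PGHCat0 := by
  obtain ⟨e, -⟩ := Quotient.mk_out (s := pointedIsometrySetoid) (interpolant E a p)
  exact (isCAT0Space_interpolantSet hX a p.1 p.2).of_isometryEquiv e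

theorem OutgrowsPackings.not_inseparable_interpolant {a : ∀ i, X i} {D : ℕ → ℕ}
    (hD : OutgrowsPackings a D) {p q : (ι → I) × (ℕ → I)} {m : ℕ} (hp : p.2 m = 1)
    (hq : q.2 m = 0) :
    ¬ Inseparable (interpolant (fun m => EuclideanSpace ℝ (Fin (D m))) a p)
      (interpolant (fun m => EuclideanSpace ℝ (Fin (D m))) a q) := by
  rw [Metric.inseparable_iff]
  exact ((div_pos (blockRadius_pos m) (by norm_num)).trans_le
    (hD.blockRadius_div_five_le_pghDistOf hp hq)).ne'

end Embedding

theorem exists_isEmbedding_of_compactSpace {H : Type*} [TopologicalSpace H] [CompactSpace H]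
    [T2Space H] [SecondCountableTopology H] {ι : Type} [Finite ι] {v : ι → H}
    (hv : Function.Injective v) {X : ι → Type} [∀ i, MetricSpace (X i)] [∀ i, ProperSpace (X i)]
    (a : ∀ i, X i) (hX : ∀ i, IsCAT0Space (X i))
    (h_dist : ∀ i j, i ≠ j → 0 < pghDistOf (X i) (X j) (a i) (a j)) :
    ∃ Φ : H → PGHSpace, IsEmbedding Φ ∧ (∀ h, Φ h ∈ PGHCat0) ∧
      ∀ i, Φ (v i) = PGHSpace.mk (X i) (a i) := by
  let _ := Fintype.ofFinite ι
  obtain ⟨D, hD⟩ := exists_outgrowsPackings a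
  obtain ⟨θ, hθ_zero, hθ_one⟩ := exists_unitInterval_zero_one_at_points hv
  obtain ⟨φ, hφ_zero, hφ_sep⟩ :=
    exists_seq_unitInterval_separating (Set.range v) (Set.finite_range v).isClosed
  let E (m : ℕ) := EuclideanSpace ℝ (Fin (D m))
  let Y (h : H) := interpolant E a (fun i => θ i h, fun m => φ m h)
  have hY : Continuous Y := (continuous_interpolant (fun i => (hX i).1) a).comp (by fun_prop)
  have h_vertex : ∀ i, Y (v i) ≈ ⟨X i, a i⟩ := fun i =>
    interpolant_equiv_of_vertex a (hθ_zero i) (fun j hji => hθ_one j i hji.symm)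
      fun m => hφ_zero m _ (Set.mem_range_self i)
  have h_sep : ∀ h h', h ≠ h' → h' ∉ Set.range v → ¬ Inseparable (Y h') (Y h) := by
    intro h h' h_ne h_notMem
    obtain ⟨m, h_zero, h_one⟩ := hφ_sep h h' h_ne h_notMem
    exact hD.not_inseparable_interpolant h_one h_zero
  have h_inj : ∀ h h', Inseparable (Y h) (Y h') → h = h' := by
    intro h h' h_insep
    by_contra h_ne
    obtain ⟨j, rfl⟩ : h' ∈ Set.range v := by_contra fun h_notMem =>
      h_sep h h' h_ne h_notMem h_insep.symm
    obtain ⟨i, rfl⟩ : h ∈ Set.range v := by_contra fun h_notMem =>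
      h_sep (v j) h (Ne.symm h_ne) h_notMem h_insep
    have h_eq := Metric.inseparable_iff.1 <| (inseparable_of_equiv (h_vertex i)).symm.trans <|
      h_insep.trans (inseparable_of_equiv (h_vertex j))
    exact (h_dist i j fun hij => h_ne (congrArg v hij)).ne' h_eq
  exact ⟨fun h => Quotient.mk _ (Y h),
    isEmbedding_quotientMk_comp (fun _ _ => inseparable_of_equiv) hY h_inj,
    fun h => mk_interpolant_mem_PGHCat0 hX a _, fun i => Quotient.sound (h_vertex i)⟩

theorem statement9_general {H : Type*} [TopologicalSpace H] [TopologicalSpace.MetrizableSpace H]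
    [TopologicalSpace.SeparableSpace H] {ι : Type} [Finite ι] {v : ι → H}
    (hv : Function.Injective v) {X : ι → Type} [∀ i, MetricSpace (X i)] [∀ i, ProperSpace (X i)]
    (a : ∀ i, X i) (hX : ∀ i, IsCAT0Space (X i))
    (h_dist : ∀ i j, i ≠ j → 0 < pghDistOf (X i) (X j) (a i) (a j)) :
    ∃ Φ : H → PGHSpace, IsEmbedding Φ ∧ (∀ h, Φ h ∈ PGHCat0) ∧
      ∀ i, Φ (v i) = PGHSpace.mk (X i) (a i) := by
  let _ := TopologicalSpace.metrizableSpaceMetric H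
  obtain ⟨F, hF⟩ := PiNatEmbed.exists_embedding_to_hilbert_cube (X := H)
  obtain ⟨Φ, hΦ, h_cat, h_vertex⟩ :=
    exists_isEmbedding_of_compactSpace (hF.injective.comp hv) a hX h_dist
  exact ⟨Φ ∘ F, hΦ.comp hF, fun h => h_cat (F h), h_vertex⟩

/-- Let `H` be a compact metrizable space, `n ≥ 1`, and
`v 0, …, v n` be `n+1` distinct points of `H`.  Let
`(X 0, a 0), …, (X n, a n)` be pointed proper CAT(0) metric spaces with
positive pairwise pointed Gromov–Hausdorff distances.  Then there is a
topological embedding `Φ` of `H` into `𝒫𝒵 ⊆ 𝒫ℳ` (i.e. an embedding into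
`𝒫ℳ` whose range consists of pointed proper CAT(0) spaces) such that
`Φ (v i)` is the pointed isometry class of `(X i, a i)`. -/
theorem statement9 {H : Type*} [TopologicalSpace H] [CompactSpace H]
    [TopologicalSpace.MetrizableSpace H]
    (n : ℕ) (hn : 1 ≤ n) (v : Fin (n + 1) → H) (hv : Function.Injective v)
    (X : Fin (n + 1) → Type) [∀ i, MetricSpace (X i)] [∀ i, ProperSpace (X i)]
    (a : ∀ i, X i)
    (hcat : ∀ i, IsCAT0Space (X i))
    (hdist : ∀ i j, i ≠ j → 0 < pghDistOf (X i) (X j) (a i) (a j)) :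
    ∃ Φ : H → PGHSpace,
      Topology.IsEmbedding Φ ∧
      (∀ h : H, Φ h ∈ PGHCat0) ∧
      ∀ i, Φ (v i) = PGHSpace.mk (X i) (a i) :=
  statement9_general hv a hcat hdist
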